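/- (Copying and deleting of acyclic diagrams) For any acyclic diagram d : ▶^m → ▶^n in Syn_M, the following equalities are derivable in PGA: (d ⊗ d) ; merge_n =_PGA merge_m ; d, and start_m ; d =_PGA start_n, where merge_k : ▶^{2k} → ▶^k and start_k : ε → ▶^k denote the k-wire generalisations of merge and start built from merge, start, identities and wire crossings. -/

import Mathlib

set_option autoImplicit true
set_option linter.unusedVariables false

namespace PaperPG

/-! ## The diagrammatic syntax `Syn_M` and the equational theory PGA -/

/-- The two generating objects (wire colours): `r` = ▶ and `l` = ◀. -/
inductive Obj : Type
  | r : Obj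
  | l : Obj
  deriving DecidableEq

/-- Objects of the free prop: words over `{▶, ◀}`. -/
abbrev Word := List Obj

/-- The word `▶^m`. -/
def rword (m : ℕ) : Word := List.replicate m Obj.r

/-- Morphisms of the free two-coloured prop `Syn_M`: formal (sequential and parallel)
composites of identities, symmetries and the generators of the calculus of parity
games, with priorities bounded by `M`. -/
inductive Syn (M : ℕ) : Word → Word → Type where
  | id : (v : Word) → Syn M v v
  | comp : {u v w : Word} → Syn M u v → Syn M v w → Syn M u w
  | tensor : {u1 w1 u2 w2 : Word} → Syn M u1 w1 → Syn M u2 w2 → Syn M (u1 ++ u2) (w1 ++ w2)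
  | symm : (v w : Word) → Syn M (v ++ w) (w ++ v)
  | player0 : Syn M [Obj.r] [Obj.r, Obj.r]
  | lose0 : Syn M [Obj.r] []
  | player1 : Syn M [Obj.r] [Obj.r, Obj.r]
  | lose1 : Syn M [Obj.r] []
  | merge : Syn M [Obj.r, Obj.r] [Obj.r]
  | start : Syn M [] [Obj.r]
  | priority : Fin (M + 1) → Syn M [Obj.r] [Obj.r]
  | cup : Syn M [] [Obj.r, Obj.l]
  | cap : Syn M [Obj.l, Obj.r] []

infixl:60 " ⨟ " => Syn.comp
infixl:65 " ⊠ " => Syn.tensor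

/-- Transport a diagram along equalities of words. -/
def Syn.castHom {M : ℕ} {u u' w w' : Word} (hu : u = u') (hw : w = w')
    (f : Syn M u w) : Syn M u' w' := by
  subst hu; subst hw; exact f

/-- The inner body of the parity axiom: `merge ⨟ player0` followed by
`(player1 ⨟ (id ⊠ priority p)) ⊠ id`. -/
def parityBody (M : ℕ) (p : Fin (M + 1)) : Syn M [Obj.r, Obj.r] [Obj.r, Obj.r, Obj.r] :=
  Syn.merge ⨟ Syn.player0
    ⨟ ((Syn.player1 ⨟ (Syn.id [Obj.r] ⊠ Syn.priority p) : Syn M [Obj.r] [Obj.r, Obj.r])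
        ⊠ Syn.id [Obj.r])

/-- The left-hand side of the parity axiom (E): the feedback loop formed, via `cup`
and `cap`, by feeding the `priority p` output of `parityBody` back to its second
input. -/
def parityLHS (M : ℕ) (p : Fin (M + 1)) : Syn M [Obj.r] [Obj.r, Obj.r] :=
  (Syn.id [Obj.r] ⊠ Syn.cup : Syn M [Obj.r] [Obj.r, Obj.r, Obj.l])
  ⨟ (parityBody M p ⊠ Syn.id [Obj.l] : Syn M [Obj.r, Obj.r, Obj.l] [Obj.r, Obj.r, Obj.r, Obj.l])
  ⨟ ((Syn.id [Obj.r] ⊠ Syn.id [Obj.r]) ⊠ Syn.symm [Obj.r] [Obj.l] :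
      Syn M [Obj.r, Obj.r, Obj.r, Obj.l] [Obj.r, Obj.r, Obj.l, Obj.r])
  ⨟ ((Syn.id [Obj.r] ⊠ Syn.symm [Obj.r] [Obj.l]) ⊠ Syn.id [Obj.r] :
      Syn M [Obj.r, Obj.r, Obj.l, Obj.r] [Obj.r, Obj.l, Obj.r, Obj.r])
  ⨟ ((Syn.id [Obj.r] ⊠ Syn.cap) ⊠ Syn.id [Obj.r] :
      Syn M [Obj.r, Obj.l, Obj.r, Obj.r] [Obj.r, Obj.r])

/-- The smallest congruence (with respect to sequential and parallel composition) on
the morphisms of `Syn_M` containing the laws of symmetric monoidal categories and the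
axioms of Parity Game Algebra (PGA): (A) compact closure and loop removal,
(B) the distributive lattice axioms, (C) the priority axioms, (D) the distributive
law of priorities over the lattice structure and (E) the parity axiom. -/
inductive PGAeq {M : ℕ} : {v w : Word} → Syn M v w → Syn M v w → Prop where
  -- equivalence
  | refl (f : Syn M v w) : PGAeq f f
  | symm_rel {f g : Syn M v w} : PGAeq f g → PGAeq g f
  | trans {f g h : Syn M v w} : PGAeq f g → PGAeq g h → PGAeq f h
  -- congruence with respect to the two compositions
  | comp_congr {f f' : Syn M u v} {g g' : Syn M v w} :
      PGAeq f f' → PGAeq g g' → PGAeq (f ⨟ g) (f' ⨟ g')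
  | tensor_congr {f f' : Syn M u1 w1} {g g' : Syn M u2 w2} :
      PGAeq f f' → PGAeq g g' → PGAeq (f ⊠ g) (f' ⊠ g')
  -- laws of (strict) symmetric monoidal categories
  | comp_assoc (f : Syn M u v) (g : Syn M v w) (h : Syn M w x) :
      PGAeq ((f ⨟ g) ⨟ h) (f ⨟ (g ⨟ h))
  | id_comp (f : Syn M v w) : PGAeq (Syn.id v ⨟ f) f
  | comp_id (f : Syn M v w) : PGAeq (f ⨟ Syn.id w) f
  | tensor_id (v w : Word) : PGAeq (Syn.id v ⊠ Syn.id w) (Syn.id (v ++ w))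
  | interchange (f1 : Syn M u1 v1) (g1 : Syn M v1 w1) (f2 : Syn M u2 v2) (g2 : Syn M v2 w2) :
      PGAeq ((f1 ⨟ g1) ⊠ (f2 ⨟ g2)) ((f1 ⊠ f2) ⨟ (g1 ⊠ g2))
  | tensor_assoc (f : Syn M u1 w1) (g : Syn M u2 w2) (h : Syn M u3 w3) :
      PGAeq (Syn.castHom (List.append_assoc u1 u2 u3) (List.append_assoc w1 w2 w3)
              ((f ⊠ g) ⊠ h))
            (f ⊠ (g ⊠ h))
  | tensor_nil (f : Syn M u w) :
      PGAeq (Syn.castHom (List.append_nil u) (List.append_nil w) (f ⊠ Syn.id [])) f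
  | swap_nat (f : Syn M u1 w1) (g : Syn M u2 w2) :
      PGAeq ((f ⊠ g) ⨟ Syn.symm w1 w2) (Syn.symm u1 u2 ⨟ (g ⊠ f))
  | swap_inv (v w : Word) : PGAeq (Syn.symm v w ⨟ Syn.symm w v) (Syn.id (v ++ w))
  | hexagon (u v w : Word) :
      PGAeq (Syn.symm u (v ++ w))
        (Syn.castHom (List.append_assoc u v w) (List.append_assoc v w u).symm
          ((Syn.symm u v ⊠ Syn.id w)
            ⨟ Syn.castHom (List.append_assoc v u w).symm rfl (Syn.id v ⊠ Syn.symm u w)))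
  -- (A) compact closure: yanking, and removal of a closed loop
  | yank_r : PGAeq (v := [Obj.r]) (w := [Obj.r]) ((Syn.cup ⊠ Syn.id [Obj.r]) ⨟ (Syn.id [Obj.r] ⊠ Syn.cap))
      (Syn.id [Obj.r])
  | yank_l : PGAeq (v := [Obj.l]) (w := [Obj.l]) ((Syn.id [Obj.l] ⊠ Syn.cup) ⨟ (Syn.cap ⊠ Syn.id [Obj.l]))
      (Syn.id [Obj.l])
  | loop : PGAeq (v := ([] : Word)) (w := ([] : Word)) (Syn.cup ⨟ Syn.symm [Obj.r] [Obj.l] ⨟ Syn.cap) (Syn.id [])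
  -- (B) distributive lattice axioms
  | B1 : PGAeq (v := [Obj.r, Obj.r, Obj.r]) (w := [Obj.r]) ((Syn.merge ⊠ Syn.id [Obj.r]) ⨟ Syn.merge)
      ((Syn.id [Obj.r] ⊠ Syn.merge) ⨟ Syn.merge)
  | B2 : PGAeq (v := [Obj.r, Obj.r]) (w := [Obj.r]) (Syn.symm [Obj.r] [Obj.r] ⨟ Syn.merge) Syn.merge
  | B3r : PGAeq (v := [Obj.r]) (w := [Obj.r]) ((Syn.id [Obj.r] ⊠ Syn.start) ⨟ Syn.merge) (Syn.id [Obj.r])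
  | B3l : PGAeq (v := [Obj.r]) (w := [Obj.r]) ((Syn.start ⊠ Syn.id [Obj.r]) ⨟ Syn.merge) (Syn.id [Obj.r])
  | B4 : PGAeq (v := [Obj.r]) (w := [Obj.r, Obj.r, Obj.r]) (Syn.player0 ⨟ (Syn.player0 ⊠ Syn.id [Obj.r]))
      (Syn.player0 ⨟ (Syn.id [Obj.r] ⊠ Syn.player0))
  | B5 : PGAeq (v := [Obj.r]) (w := [Obj.r, Obj.r]) (Syn.player0 ⨟ Syn.symm [Obj.r] [Obj.r]) Syn.player0
  | B6r : PGAeq (v := [Obj.r]) (w := [Obj.r]) (Syn.player0 ⨟ (Syn.lose0 ⊠ Syn.id [Obj.r])) (Syn.id [Obj.r])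
  | B6l : PGAeq (v := [Obj.r]) (w := [Obj.r]) (Syn.player0 ⨟ (Syn.id [Obj.r] ⊠ Syn.lose0)) (Syn.id [Obj.r])
  | B7 : PGAeq (v := [Obj.r]) (w := [Obj.r, Obj.r, Obj.r]) (Syn.player1 ⨟ (Syn.player1 ⊠ Syn.id [Obj.r]))
      (Syn.player1 ⨟ (Syn.id [Obj.r] ⊠ Syn.player1))
  | B8 : PGAeq (v := [Obj.r]) (w := [Obj.r, Obj.r]) (Syn.player1 ⨟ Syn.symm [Obj.r] [Obj.r]) Syn.player1
  | B9r : PGAeq (v := [Obj.r]) (w := [Obj.r]) (Syn.player1 ⨟ (Syn.lose1 ⊠ Syn.id [Obj.r])) (Syn.id [Obj.r])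
  | B9l : PGAeq (v := [Obj.r]) (w := [Obj.r]) (Syn.player1 ⨟ (Syn.id [Obj.r] ⊠ Syn.lose1)) (Syn.id [Obj.r])
  | B10 : PGAeq (v := [Obj.r, Obj.r]) (w := [Obj.r, Obj.r]) (Syn.merge ⨟ Syn.player0)
      ((Syn.player0 ⊠ Syn.player0)
        ⨟ ((Syn.id [Obj.r] ⊠ Syn.symm [Obj.r] [Obj.r]) ⊠ Syn.id [Obj.r] :
          Syn M [Obj.r, Obj.r, Obj.r, Obj.r] [Obj.r, Obj.r, Obj.r, Obj.r])
        ⨟ (Syn.merge ⊠ Syn.merge))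
  | B11 : PGAeq (v := [Obj.r, Obj.r]) (w := ([] : Word)) (Syn.merge ⨟ Syn.lose0) (Syn.lose0 ⊠ Syn.lose0)
  | B12 : PGAeq (v := ([] : Word)) (w := [Obj.r, Obj.r]) (Syn.start ⨟ Syn.player0) (Syn.start ⊠ Syn.start)
  | B13 : PGAeq (v := ([] : Word)) (w := [Obj.r, Obj.r]) (Syn.start ⨟ Syn.player1) (Syn.start ⊠ Syn.start)
  | B14 : PGAeq (v := ([] : Word)) (w := ([] : Word)) (Syn.start ⨟ Syn.lose0) (Syn.id [])
  | B15 : PGAeq (v := ([] : Word)) (w := ([] : Word)) (Syn.start ⨟ Syn.lose1) (Syn.id [])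
  | B16 : PGAeq (v := [Obj.r]) (w := [Obj.r]) (Syn.player0 ⨟ Syn.merge) (Syn.id [Obj.r])
  | B17 : PGAeq (v := [Obj.r]) (w := [Obj.r]) (Syn.player1 ⨟ Syn.merge) (Syn.id [Obj.r])
  | B18 : PGAeq (v := [Obj.r, Obj.r]) (w := [Obj.r, Obj.r]) (Syn.merge ⨟ Syn.player1)
      ((Syn.player1 ⊠ Syn.player1)
        ⨟ ((Syn.id [Obj.r] ⊠ Syn.symm [Obj.r] [Obj.r]) ⊠ Syn.id [Obj.r] :
          Syn M [Obj.r, Obj.r, Obj.r, Obj.r] [Obj.r, Obj.r, Obj.r, Obj.r])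
        ⨟ (Syn.merge ⊠ Syn.merge))
  | B19 : PGAeq (v := [Obj.r, Obj.r]) (w := ([] : Word)) (Syn.merge ⨟ Syn.lose1) (Syn.lose1 ⊠ Syn.lose1)
  | B20 : PGAeq (v := [Obj.r]) (w := [Obj.r, Obj.r, Obj.r]) (Syn.player0 ⨟ (Syn.player1 ⊠ Syn.id [Obj.r]))
      (Syn.player1 ⨟ (Syn.player0 ⊠ Syn.player0)
        ⨟ ((Syn.id [Obj.r] ⊠ Syn.symm [Obj.r] [Obj.r]) ⊠ Syn.id [Obj.r] :
          Syn M [Obj.r, Obj.r, Obj.r, Obj.r] [Obj.r, Obj.r, Obj.r, Obj.r])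
        ⨟ ((Syn.id [Obj.r] ⊠ Syn.id [Obj.r]) ⊠ Syn.merge :
          Syn M [Obj.r, Obj.r, Obj.r, Obj.r] [Obj.r, Obj.r, Obj.r]))
  | B21 : PGAeq (v := [Obj.r]) (w := [Obj.r]) (Syn.player0 ⨟ (Syn.lose1 ⊠ Syn.id [Obj.r])) (Syn.lose1 ⨟ Syn.start)
  | B22 : PGAeq (v := [Obj.r]) (w := [Obj.r, Obj.r, Obj.r]) (Syn.player1 ⨟ (Syn.player0 ⊠ Syn.id [Obj.r]))
      (Syn.player0 ⨟ (Syn.player1 ⊠ Syn.player1)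
        ⨟ ((Syn.id [Obj.r] ⊠ Syn.symm [Obj.r] [Obj.r]) ⊠ Syn.id [Obj.r] :
          Syn M [Obj.r, Obj.r, Obj.r, Obj.r] [Obj.r, Obj.r, Obj.r, Obj.r])
        ⨟ ((Syn.id [Obj.r] ⊠ Syn.id [Obj.r]) ⊠ Syn.merge :
          Syn M [Obj.r, Obj.r, Obj.r, Obj.r] [Obj.r, Obj.r, Obj.r]))
  | B23 : PGAeq (v := [Obj.r]) (w := [Obj.r]) (Syn.player1 ⨟ (Syn.lose0 ⊠ Syn.id [Obj.r])) (Syn.lose0 ⨟ Syn.start)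
  -- (C) priority axioms
  | C1 (p : Fin (M + 1)) : PGAeq (v := [Obj.r, Obj.r]) (w := [Obj.r]) ((Syn.priority p ⊠ Syn.priority p) ⨟ Syn.merge)
      (Syn.merge ⨟ Syn.priority p)
  | C2 (p : Fin (M + 1)) : PGAeq (v := ([] : Word)) (w := [Obj.r]) (Syn.start ⨟ Syn.priority p) Syn.start
  | C3 (p q : Fin (M + 1)) : PGAeq (v := [Obj.r]) (w := [Obj.r]) (Syn.priority p ⨟ Syn.priority q)
      (Syn.priority (max p q))
  | C4 : PGAeq (Syn.priority 0) (Syn.id [Obj.r])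
  -- (D) distributive law of priorities over the lattice structure
  | D1 (p : Fin (M + 1)) : PGAeq (v := [Obj.r]) (w := [Obj.r, Obj.r]) (Syn.priority p ⨟ Syn.player0)
      (Syn.player0 ⨟ (Syn.priority p ⊠ Syn.priority p))
  | D2 (p : Fin (M + 1)) : PGAeq (v := [Obj.r]) (w := ([] : Word)) (Syn.priority p ⨟ Syn.lose0) Syn.lose0
  | D3 (p : Fin (M + 1)) : PGAeq (v := [Obj.r]) (w := [Obj.r, Obj.r]) (Syn.priority p ⨟ Syn.player1)
      (Syn.player1 ⨟ (Syn.priority p ⊠ Syn.priority p))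
  | D4 (p : Fin (M + 1)) : PGAeq (v := [Obj.r]) (w := ([] : Word)) (Syn.priority p ⨟ Syn.lose1) Syn.lose1
  -- (E) the parity axiom
  | parity_even (p : Fin (M + 1)) (h : Even p.val) :
      PGAeq (parityLHS M p) Syn.player0
  | parity_odd (p : Fin (M + 1)) (h : Odd p.val) :
      PGAeq (v := [Obj.r]) (w := [Obj.r, Obj.r]) (parityLHS M p) (Syn.start ⊠ Syn.id [Obj.r])
/-! ## Acyclic diagrams, layers and normal forms -/

/-- A diagram is *acyclic* if it is composed only of the generators
`player0, lose0, player1, lose1, merge, start, priority p` (together with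
identities and wire crossings on `▶`-wires), i.e. it contains no `cup` or `cap`. -/
inductive Acyclic {M : ℕ} : {v w : Word} → Syn M v w → Prop where
  | id (k : ℕ) : Acyclic (Syn.id (rword k))
  | symm (k j : ℕ) : Acyclic (Syn.symm (rword k) (rword j))
  | player0 : Acyclic Syn.player0
  | lose0 : Acyclic Syn.lose0
  | player1 : Acyclic Syn.player1
  | lose1 : Acyclic Syn.lose1
  | merge : Acyclic Syn.merge
  | start : Acyclic Syn.start
  | priority (p : Fin (M + 1)) : Acyclic (Syn.priority p)
  | comp {u v w : Word} {f : Syn M u v} {g : Syn M v w} :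
      Acyclic f → Acyclic g → Acyclic (f ⨟ g)
  | tensor {u1 w1 u2 w2 : Word} {f : Syn M u1 w1} {g : Syn M u2 w2} :
      Acyclic f → Acyclic g → Acyclic (f ⊠ g)

/-- A *layer* of generators from `S`: a diagram built only from generators in `S`
together with identities and wire crossings. -/
inductive Layer {M : ℕ} (S : {v w : Word} → Syn M v w → Prop) :
    {v w : Word} → Syn M v w → Prop where
  | base {v w : Word} {f : Syn M v w} : S f → Layer S f
  | id (k : ℕ) : Layer S (Syn.id (rword k))
  | symm (k j : ℕ) : Layer S (Syn.symm (rword k) (rword j))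
  | comp {u v w : Word} {f : Syn M u v} {g : Syn M v w} :
      Layer S f → Layer S g → Layer S (f ⨟ g)
  | tensor {u1 w1 u2 w2 : Word} {f : Syn M u1 w1} {g : Syn M u2 w2} :
      Layer S f → Layer S g → Layer S (f ⊠ g)

/-- The generators `player0`, `lose0`. -/
inductive Gen0 {M : ℕ} : {v w : Word} → Syn M v w → Prop where
  | player0 : Gen0 Syn.player0
  | lose0 : Gen0 Syn.lose0

/-- The generators `player1`, `lose1`. -/
inductive Gen1 {M : ℕ} : {v w : Word} → Syn M v w → Prop where
  | player1 : Gen1 Syn.player1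
  | lose1 : Gen1 Syn.lose1

/-- The generators `priority p`. -/
inductive GenP {M : ℕ} : {v w : Word} → Syn M v w → Prop where
  | priority (p : Fin (M + 1)) : GenP (Syn.priority p)

/-- The generators `merge`, `start`. -/
inductive GenM {M : ℕ} : {v w : Word} → Syn M v w → Prop where
  | merge : GenM Syn.merge
  | start : GenM Syn.start

/-- A diagram is in *normal form* when it factors into a layer of `player0/lose0`,
followed by a layer of `player1/lose1`, followed by a layer of priorities, followed
by a layer of `merge/start`. -/
def InNormalForm {M : ℕ} {v w : Word} (d : Syn M v w) : Prop :=
  ∃ (a b c : Word) (f1 : Syn M v a) (f2 : Syn M a b) (f3 : Syn M b c) (f4 : Syn M c w),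
    Layer Gen0 f1 ∧ Layer Gen1 f2 ∧ Layer GenP f3 ∧ Layer GenM f4 ∧
    d = f1 ⨟ (f2 ⨟ (f3 ⨟ f4))

theorem rword_append (a b : ℕ) : rword a ++ rword b = rword (a + b) :=
  (List.replicate_add a b Obj.r).symm

theorem mergeN_dom (k : ℕ) :
    [Obj.r] ++ ((rword k ++ [Obj.r]) ++ rword k) = rword ((k + 1) + (k + 1)) := by
  show rword 1 ++ ((rword k ++ rword 1) ++ rword k) = rword ((k + 1) + (k + 1))
  simp only [rword_append]
  exact congrArg rword (by omega)

theorem mergeN_mid (k : ℕ) :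
    [Obj.r, Obj.r] ++ rword (k + k) = [Obj.r] ++ (([Obj.r] ++ rword k) ++ rword k) := by
  show rword 2 ++ rword (k + k) = rword 1 ++ ((rword 1 ++ rword k) ++ rword k)
  simp only [rword_append]
  exact congrArg rword (by omega)

/-- The `k`-wire generalisation `merge_k : ▶^{2k} → ▶^k` of `merge`, merging the
`i`-th wire of the first group with the `i`-th wire of the second group. -/
def mergeN (M : ℕ) : (k : ℕ) → Syn M (rword (k + k)) (rword k)
  | 0 => Syn.id []
  | k + 1 =>
      Syn.castHom (mergeN_dom k) rfl
        ((Syn.id [Obj.r] ⊠ (Syn.symm (rword k) [Obj.r] ⊠ Syn.id (rword k)))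
          ⨟ Syn.castHom (mergeN_mid k) rfl (Syn.merge ⊠ mergeN M k))

/-- The `k`-wire generalisation `start_k : ε → ▶^k` of `start`. -/
def startN (M : ℕ) : (k : ℕ) → Syn M [] (rword k)
  | 0 => Syn.id []
  | k + 1 => Syn.start ⊠ startN M k

section CategoryConstruction
open CategoryTheory MonoidalCategory

/-- Words, as objects of the quotient category. -/
structure Wd (M : ℕ) : Type where
  /-- the underlying word -/
  w : Word

theorem Wd.eq {M : ℕ} {X Y : Wd M} (h : X.w = Y.w) : X = Y := by
  cases X; cases Y; cases h; rfl

/-- The setoid of derivable equality. -/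
def pgaSetoid (M : ℕ) (u v : Word) : Setoid (Syn M u v) where
  r := PGAeq
  iseqv := ⟨PGAeq.refl, PGAeq.symm_rel, PGAeq.trans⟩

instance wdCategory (M : ℕ) : Category (Wd M) where
  Hom u v := Quotient (pgaSetoid M u.w v.w)
  id u := Quotient.mk _ (Syn.id u.w)
  comp f g := Quotient.map₂ Syn.comp (fun _ _ h _ _ h' => PGAeq.comp_congr h h') f g
  id_comp f := by
    induction f using Quotient.inductionOn
    exact Quotient.sound (PGAeq.id_comp _)
  comp_id f := by
    induction f using Quotient.inductionOn
    exact Quotient.sound (PGAeq.comp_id _)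
  assoc f g h := by
    induction f using Quotient.inductionOn
    induction g using Quotient.inductionOn
    induction h using Quotient.inductionOn
    exact Quotient.sound (PGAeq.comp_assoc _ _ _)

/-- The class of a diagram. -/
def cl {M : ℕ} {u v : Word} (f : Syn M u v) : (Wd.mk (M := M) u) ⟶ (Wd.mk (M := M) v) :=
  Quotient.mk (pgaSetoid M u v) f

theorem cl_eq {M : ℕ} {u v : Word} {f g : Syn M u v} : cl f = cl g ↔ PGAeq f g :=
  ⟨fun h => Quotient.exact h, fun h => Quotient.sound h⟩

theorem cl_surj {M : ℕ} {u v : Word} (f : (Wd.mk (M := M) u) ⟶ (Wd.mk (M := M) v)) :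
    ∃ f' : Syn M u v, f = cl f' := by
  induction f using Quotient.inductionOn with
  | h a => exact ⟨a, rfl⟩

theorem cl_comp {M : ℕ} {u v w : Word} (f : Syn M u v) (g : Syn M v w) :
    cl (f ⨟ g) = cl f ≫ cl g := rfl

theorem cl_id {M : ℕ} (u : Word) : cl (Syn.id (M := M) u) = 𝟙 (Wd.mk (M := M) u) := rfl

theorem cl_cast {M : ℕ} {u u' w w' : Word} (hu : u = u') (hw : w = w') (f : Syn M u w) :
    cl (Syn.castHom hu hw f) =
      eqToHom (Wd.eq hu.symm) ≫ cl f ≫ eqToHom (Wd.eq hw) := by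
  subst hu; subst hw
  simp [Syn.castHom]

/-- Tensor of objects. -/
abbrev tob {M : ℕ} (X Y : Wd M) : Wd M := ⟨X.w ++ Y.w⟩

/-- Tensor of classes. -/
def tens {M : ℕ} {u1 w1 u2 w2 : Wd M} (f : u1 ⟶ w1) (g : u2 ⟶ w2) :
    tob u1 u2 ⟶ tob w1 w2 :=
  Quotient.map₂ (sa := pgaSetoid M u1.w w1.w) (sb := pgaSetoid M u2.w w2.w)
    (sc := pgaSetoid M (u1.w ++ u2.w) (w1.w ++ w2.w)) Syn.tensor
    (fun _ _ h _ _ h' => PGAeq.tensor_congr h h') f g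

theorem cl_tens {M : ℕ} {u1 w1 u2 w2 : Word} (f : Syn M u1 w1) (g : Syn M u2 w2) :
    cl (f ⊠ g) = tens (cl f) (cl g) := rfl

theorem tens_id {M : ℕ} (u v : Wd M) :
    tens (𝟙 u) (𝟙 v) = 𝟙 (tob u v) :=
  Quotient.sound (PGAeq.tensor_id _ _)

theorem tens_comp {M : ℕ} {u1 v1 w1 u2 v2 w2 : Wd M} (f1 : u1 ⟶ v1) (f2 : u2 ⟶ v2)
    (g1 : v1 ⟶ w1) (g2 : v2 ⟶ w2) :
    tens f1 f2 ≫ tens g1 g2 = tens (f1 ≫ g1) (f2 ≫ g2) := by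
  obtain ⟨f1, rfl⟩ := cl_surj f1
  obtain ⟨f2, rfl⟩ := cl_surj f2
  obtain ⟨g1, rfl⟩ := cl_surj g1
  obtain ⟨g2, rfl⟩ := cl_surj g2
  exact (Quotient.sound (PGAeq.interchange _ _ _ _)).symm

theorem tens_eqToHom {M : ℕ} {u u' v v' : Wd M} (h : u = u') (h' : v = v') :
    tens (eqToHom h) (eqToHom h') = eqToHom (show tob u v = tob u' v' by rw [h, h']) := by
  subst h; subst h'
  exact tens_id _ _

theorem tob_assoc {M : ℕ} (X Y Z : Wd M) : tob (tob X Y) Z = tob X (tob Y Z) :=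
  Wd.eq (List.append_assoc _ _ _)

/-- The unit object. -/
abbrev un (M : ℕ) : Wd M := ⟨[]⟩

theorem tob_un {M : ℕ} (X : Wd M) : tob X (un M) = X := Wd.eq (List.append_nil _)
theorem un_tob {M : ℕ} (X : Wd M) : tob (un M) X = X := rfl

theorem tens_assoc {M : ℕ} {u1 w1 u2 w2 u3 w3 : Wd M} (f : u1 ⟶ w1) (g : u2 ⟶ w2)
    (h : u3 ⟶ w3) :
    tens (tens f g) h ≫ eqToHom (tob_assoc w1 w2 w3) =
      eqToHom (tob_assoc u1 u2 u3) ≫ tens f (tens g h) := by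
  obtain ⟨f, rfl⟩ := cl_surj f
  obtain ⟨g, rfl⟩ := cl_surj g
  obtain ⟨h, rfl⟩ := cl_surj h
  have := cl_eq.2 (PGAeq.tensor_assoc f g h)
  rw [cl_cast] at this
  change _ = eqToHom _ ≫ cl (f ⊠ (g ⊠ h))
  rw [← this, eqToHom_trans_assoc, eqToHom_refl, Category.id_comp]
  rfl

theorem tens_nil {M : ℕ} {u w : Wd M} (f : u ⟶ w) :
    tens f (𝟙 (un M)) = eqToHom (tob_un u) ≫ f ≫ eqToHom (tob_un w).symm := by
  obtain ⟨f, rfl⟩ := cl_surj f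
  have := cl_eq.2 (PGAeq.tensor_nil f)
  rw [cl_cast] at this
  change cl (f ⊠ Syn.id []) = eqToHom _ ≫ cl f ≫ eqToHom _
  rw [← this]
  simp

/-- Class of a symmetry. -/
def sw {M : ℕ} (u v : Wd M) : tob u v ⟶ tob v u := cl (Syn.symm u.w v.w)

theorem sw_nat {M : ℕ} {u1 w1 u2 w2 : Wd M} (f : u1 ⟶ w1) (g : u2 ⟶ w2) :
    tens f g ≫ sw w1 w2 = sw u1 u2 ≫ tens g f := by
  obtain ⟨f, rfl⟩ := cl_surj f
  obtain ⟨g, rfl⟩ := cl_surj g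
  exact Quotient.sound (PGAeq.swap_nat _ _)

theorem sw_inv {M : ℕ} (u v : Wd M) : sw u v ≫ sw v u = 𝟙 _ :=
  Quotient.sound (PGAeq.swap_inv _ _)

theorem sw_hex {M : ℕ} (u v w : Wd M) :
    sw u (tob v w) =
      eqToHom (tob_assoc u v w).symm ≫ tens (sw u v) (𝟙 w) ≫
      eqToHom (tob_assoc v u w) ≫ tens (𝟙 v) (sw u w) ≫
      eqToHom (tob_assoc v w u).symm := by
  have := cl_eq.2 (PGAeq.hexagon (M := M) u.w v.w w.w)
  rw [cl_cast, cl_comp, cl_cast] at this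
  refine this.trans ?_
  simp only [Category.assoc, eqToHom_trans]
  rfl

/-- `sw X []` as an endomorphism of `X`. -/
def ss {M : ℕ} (X : Wd M) : X ⟶ X :=
  eqToHom (tob_un X).symm ≫ sw X (un M) ≫ eqToHom (un_tob X)

/-- `sw [] X` as an endomorphism of `X`. -/
def tt {M : ℕ} (X : Wd M) : X ⟶ X :=
  eqToHom (un_tob X).symm ≫ sw (un M) X ≫ eqToHom (tob_un X)

theorem sw_eq_ss {M : ℕ} (X : Wd M) :
    sw X (un M) = eqToHom (tob_un X) ≫ ss X ≫ eqToHom (un_tob X).symm := by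
  simp [ss]

theorem sw_eq_tt {M : ℕ} (X : Wd M) :
    sw (un M) X = eqToHom (un_tob X) ≫ tt X ≫ eqToHom (tob_un X).symm := by
  simp [tt]

theorem ss_tt {M : ℕ} (X : Wd M) : ss X ≫ tt X = 𝟙 X := by
  simp only [ss, tt, Category.assoc, eqToHom_refl, Category.id_comp]
  rw [← Category.assoc (sw X (un M)), sw_inv]
  simp

theorem tt_ss {M : ℕ} (X : Wd M) : tt X ≫ ss X = 𝟙 X := by
  simp only [ss, tt, Category.assoc, eqToHom_trans_assoc, eqToHom_refl, Category.id_comp]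
  rw [← Category.assoc (sw (un M) X), sw_inv]
  simp
  rfl

theorem tt_cast {M : ℕ} {X Y : Wd M} (h : X = Y) :
    tt X = eqToHom h ≫ tt Y ≫ eqToHom h.symm := by
  subst h; simp

theorem ss_cast {M : ℕ} {X Y : Wd M} (h : X = Y) :
    ss X = eqToHom h ≫ ss Y ≫ eqToHom h.symm := by
  subst h; simp

theorem nil_tens_aux {M : ℕ} {u w : Wd M} (f : u ⟶ w) :
    tens (𝟙 (un M)) f =
      eqToHom (un_tob u) ≫ tt u ≫ f ≫ ss w ≫ eqToHom (un_tob w).symm := by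
  have h := sw_nat (𝟙 (un M)) f
  have h3 := sw_inv (un M) w
  calc _ = tens (𝟙 (un M)) f ≫ (sw (un M) w ≫ sw w (un M)) := by rw [h3, Category.comp_id]
    _ = _ := by rw [← Category.assoc, h, tens_nil, sw_eq_ss, sw_eq_tt]; simp

theorem ss_eq {M : ℕ} (u : Wd M) : ss u = 𝟙 u := by
  have hx := sw_hex u (un M) (un M)
  have hx2 : sw u (un M) = eqToHom (tob_assoc u (un M) (un M)).symm ≫ tens (sw u (un M)) (𝟙 (un M)) ≫
      eqToHom (tob_assoc (un M) u (un M)) ≫ tens (𝟙 (un M)) (sw u (un M)) ≫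
      eqToHom (tob_assoc (un M) (un M) u).symm := hx
  rw [tens_nil, nil_tens_aux, tt_cast (tob_un u)] at hx2
  rw [ss_cast (un_tob u)] at hx2
  simp only [sw_eq_ss] at hx2
  have hx3 : eqToHom (tob_un u) ≫ ss u = eqToHom (tob_un u) ≫ ss u ≫ ss u := by
    have e2 : ss u ≫ tt u ≫ ss u ≫ ss u = ss u ≫ ss u := by
      rw [← Category.assoc, ss_tt, Category.id_comp]
    rw [← e2]
    have hx4 := congrArg (fun z => z ≫ eqToHom (un_tob u)) hx2
    simpa using hx4
  have h4 : ss u = ss u ≫ ss u := by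
    have := congrArg (fun z => eqToHom (tob_un u).symm ≫ z) hx3
    simpa using this
  have h5 := congrArg (fun z => z ≫ tt u) h4
  simp only [Category.assoc, ss_tt, Category.comp_id] at h5
  exact h5.symm

theorem tt_eq {M : ℕ} (u : Wd M) : tt u = 𝟙 u := by
  have := tt_ss u
  rwa [ss_eq, Category.comp_id] at this

theorem nil_tens {M : ℕ} {u w : Wd M} (f : u ⟶ w) :
    tens (𝟙 (un M)) f = eqToHom (un_tob u) ≫ f ≫ eqToHom (un_tob w).symm := by
  rw [nil_tens_aux, ss_eq, tt_eq]; simp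

instance wdStruct (M : ℕ) : MonoidalCategoryStruct (Wd M) where
  tensorObj := tob
  whiskerLeft X _ _ f := tens (𝟙 X) f
  whiskerRight f Y := tens f (𝟙 Y)
  tensorHom := tens
  tensorUnit := un M
  associator X Y Z := eqToIso (tob_assoc X Y Z)
  leftUnitor X := eqToIso (un_tob X)
  rightUnitor X := eqToIso (tob_un X)

instance wdMonoidal (M : ℕ) : MonoidalCategory (Wd M) :=
  MonoidalCategory.ofTensorHom
    (id_tensorHom_id := tens_id)
    (id_tensorHom := fun _ _ _ _ => rfl)
    (tensorHom_id := fun _ _ => rfl)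
    (tensorHom_comp_tensorHom := tens_comp)
    (associator_naturality := tens_assoc)
    (leftUnitor_naturality := fun f => by
      change tens (𝟙 (un M)) f ≫ eqToHom (un_tob _) = eqToHom (un_tob _) ≫ f
      rw [nil_tens]; simp)
    (rightUnitor_naturality := fun f => by
      change tens f (𝟙 (un M)) ≫ eqToHom (tob_un _) = eqToHom (tob_un _) ≫ f
      rw [tens_nil]; simp)
    (pentagon := fun W X Y Z => by
      change tens (eqToHom (tob_assoc W X Y)) (eqToHom (Eq.refl Z)) ≫
          eqToHom (tob_assoc W (tob X Y) Z) ≫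
          tens (eqToHom (Eq.refl W)) (eqToHom (tob_assoc X Y Z)) =
        eqToHom (tob_assoc (tob W X) Y Z) ≫ eqToHom (tob_assoc W X (tob Y Z))
      simp only [tens_eqToHom, eqToHom_trans])
    (triangle := fun X Y => by
      change eqToHom (tob_assoc X (un M) Y) ≫ tens (eqToHom (Eq.refl X)) (eqToHom (un_tob Y)) =
        tens (eqToHom (tob_un X)) (eqToHom (Eq.refl Y))
      simp only [tens_eqToHom, eqToHom_trans])

theorem sw_hex' {M : ℕ} (u v w : Wd M) :
    sw (tob u v) w =
      eqToHom (tob_assoc u v w) ≫ tens (𝟙 u) (sw v w) ≫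
      eqToHom (tob_assoc u w v).symm ≫ tens (sw u w) (𝟙 v) ≫
      eqToHom (tob_assoc w u v) := by
  have key : (eqToHom (tob_assoc u v w) ≫ tens (𝟙 u) (sw v w) ≫
      eqToHom (tob_assoc u w v).symm ≫ tens (sw u w) (𝟙 v) ≫
      eqToHom (tob_assoc w u v)) ≫ sw w (tob u v) = 𝟙 _ := by
    rw [sw_hex]
    simp only [Category.assoc, eqToHom_trans_assoc, eqToHom_refl, Category.id_comp]
    have a : ∀ {Z} (k : _ ⟶ Z), tens (sw u w) (𝟙 v) ≫ tens (sw w u) (𝟙 v) ≫ k = k := by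
      intro Z k
      rw [← Category.assoc, tens_comp, sw_inv, Category.comp_id, tens_id, Category.id_comp]
    have b : ∀ {Z} (k : _ ⟶ Z), tens (𝟙 u) (sw v w) ≫ tens (𝟙 u) (sw w v) ≫ k = k := by
      intro Z k
      rw [← Category.assoc, tens_comp, sw_inv, Category.comp_id, tens_id, Category.id_comp]
    rw [a]
    simp only [eqToHom_trans_assoc, eqToHom_refl, Category.id_comp]
    rw [b]
    simp
  have := congrArg (fun z => z ≫ sw (tob u v) w) key
  simp only [Category.assoc, sw_inv, Category.comp_id, Category.id_comp] at this
  exact this.symm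

instance wdBraided (M : ℕ) : BraidedCategory (Wd M) where
  braiding X Y := ⟨sw X Y, sw Y X, sw_inv X Y, sw_inv Y X⟩
  braiding_naturality_right X _ _ f := sw_nat (𝟙 X) f
  braiding_naturality_left f Z := sw_nat f (𝟙 Z)
  hexagon_forward X Y Z := by
    change eqToHom (tob_assoc X Y Z) ≫ sw X (tob Y Z) ≫ eqToHom (tob_assoc Y Z X) =
      tens (sw X Y) (𝟙 Z) ≫ eqToHom (tob_assoc Y X Z) ≫ tens (𝟙 Y) (sw X Z)
    rw [sw_hex]; simp
  hexagon_reverse X Y Z := by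
    change eqToHom (tob_assoc X Y Z).symm ≫ sw (tob X Y) Z ≫ eqToHom (tob_assoc Z X Y).symm =
      tens (𝟙 X) (sw Y Z) ≫ eqToHom (tob_assoc X Z Y).symm ≫ tens (sw X Z) (𝟙 Y)
    rw [sw_hex']; simp

instance wdSymmetric (M : ℕ) : SymmetricCategory (Wd M) where
  symmetry X Y := sw_inv X Y


open MonObj

/-- The object `▶`. -/
def RR (M : ℕ) : Wd M := ⟨[Obj.r]⟩

/-- The object `▶^k`. -/
def WW (M k : ℕ) : Wd M := ⟨rword k⟩

theorem eqToHom_self {M : ℕ} {X : Wd M} (h : X = X) : eqToHom h = 𝟙 X := rfl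

instance monRR (M : ℕ) : MonObj (RR M) where
  one := (cl Syn.start : un M ⟶ RR M)
  mul := (cl Syn.merge : tob (RR M) (RR M) ⟶ RR M)
  one_mul := cl_eq.2 PGAeq.B3l
  mul_one := cl_eq.2 PGAeq.B3r
  mul_assoc := by
    refine (cl_eq.2 PGAeq.B1).trans ?_
    exact (Category.id_comp (cl ((Syn.id [Obj.r] ⊠ Syn.merge) ⨟ Syn.merge) :
      tob (RR M) (tob (RR M) (RR M)) ⟶ RR M)).symm

instance commRR (M : ℕ) : IsCommMonObj (RR M) where
  mul_comm := cl_eq.2 PGAeq.B2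

theorem start_hom (M : ℕ) : IsMonHom (show 𝟙_ (Wd M) ⟶ RR M from cl Syn.start) where
  one_hom := Category.id_comp _
  mul_hom := by
    change (λ_ (𝟙_ (Wd M))).hom ≫ η[RR M] = (η[RR M] ⊗ₘ η[RR M]) ≫ μ[RR M]
    simp [tensorHom_def']

theorem merge_hom (M : ℕ) : IsMonHom (show RR M ⊗ RR M ⟶ RR M from cl Syn.merge) where
  one_hom := by
    change ((λ_ (𝟙_ (Wd M))).inv ≫ (η[RR M] ⊗ₘ η[RR M])) ≫ μ[RR M] = η[RR M]
    simp [tensorHom_def']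
  mul_hom := by
    change (tensorμ (RR M) (RR M) (RR M) (RR M) ≫ (μ ⊗ₘ μ)) ≫ μ[RR M] = (μ[RR M] ⊗ₘ μ[RR M]) ≫ μ[RR M]
    simp

theorem priority_hom (M : ℕ) (p : Fin (M + 1)) :
    IsMonHom (show RR M ⟶ RR M from cl (Syn.priority p)) where
  one_hom := cl_eq.2 (PGAeq.C2 p)
  mul_hom := (cl_eq.2 (PGAeq.C1 p)).symm

theorem lose0_hom (M : ℕ) : IsMonHom (show RR M ⟶ 𝟙_ (Wd M) from cl Syn.lose0) where
  one_hom := cl_eq.2 PGAeq.B14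
  mul_hom := (cl_eq.2 PGAeq.B11).trans (Category.comp_id
    (cl (Syn.lose0 ⊠ Syn.lose0) : tob (RR M) (RR M) ⟶ un M)).symm

theorem lose1_hom (M : ℕ) : IsMonHom (show RR M ⟶ 𝟙_ (Wd M) from cl Syn.lose1) where
  one_hom := cl_eq.2 PGAeq.B15
  mul_hom := (cl_eq.2 PGAeq.B19).trans (Category.comp_id
    (cl (Syn.lose1 ⊠ Syn.lose1) : tob (RR M) (RR M) ⟶ un M)).symm

theorem tensorμ_eq {M : ℕ} (X Y Z W : Wd M) : tensorμ X Y Z W =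
    eqToHom (show (X ⊗ Y) ⊗ (Z ⊗ W) = X ⊗ ((Y ⊗ Z) ⊗ W) from
        Wd.eq (by change (X.w ++ Y.w) ++ (Z.w ++ W.w) = X.w ++ ((Y.w ++ Z.w) ++ W.w); simp)) ≫
      tens (𝟙 X) (tens (sw Y Z) (𝟙 W)) ≫
    eqToHom (show X ⊗ ((Z ⊗ Y) ⊗ W) = (X ⊗ Z) ⊗ (Y ⊗ W) from
        Wd.eq (by change X.w ++ ((Z.w ++ Y.w) ++ W.w) = (X.w ++ Z.w) ++ (Y.w ++ W.w); simp)) := by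
  change eqToHom (tob_assoc X Y (tob Z W)) ≫
    tens (eqToHom (Eq.refl X)) (eqToHom (tob_assoc Y Z W).symm) ≫
    tens (𝟙 X) (tens (sw Y Z) (𝟙 W)) ≫
    tens (eqToHom (Eq.refl X)) (eqToHom (tob_assoc Z Y W)) ≫
    eqToHom (tob_assoc X Z (tob Y W)).symm = _
  simp only [tens_eqToHom, eqToHom_trans, eqToHom_trans_assoc]

theorem tensorμ_RR (M : ℕ) : tensorμ (RR M) (RR M) (RR M) (RR M) =
    cl ((Syn.id [Obj.r] ⊠ Syn.symm [Obj.r] [Obj.r]) ⊠ Syn.id [Obj.r]) := by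
  rw [tensorμ_eq]
  have := tens_assoc (𝟙 (RR M)) (sw (RR M) (RR M)) (𝟙 (RR M))
  have h2 : tens (tens (𝟙 (RR M)) (sw (RR M) (RR M))) (𝟙 (RR M)) =
    tens (𝟙 (RR M)) (tens (sw (RR M) (RR M)) (𝟙 (RR M))) := by
    refine (Category.comp_id _).symm.trans (this.trans (Category.id_comp _))
  refine Eq.trans ?_ h2.symm
  exact (Category.id_comp _).trans (Category.comp_id _)

theorem player0_hom (M : ℕ) : IsMonHom (show RR M ⟶ RR M ⊗ RR M from cl Syn.player0) where
  one_hom := (cl_eq.2 PGAeq.B12).trans (Category.id_comp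
    (cl (Syn.start ⊠ Syn.start) : un M ⟶ tob (RR M) (RR M))).symm
  mul_hom := by
    rw [tensorObj.mul_def, tensorμ_RR]
    refine (cl_eq.2 PGAeq.B10).trans ?_
    rw [cl_comp, cl_comp]
    exact Category.assoc _ _ _

theorem player1_hom (M : ℕ) : IsMonHom (show RR M ⟶ RR M ⊗ RR M from cl Syn.player1) where
  one_hom := (cl_eq.2 PGAeq.B13).trans (Category.id_comp
    (cl (Syn.start ⊠ Syn.start) : un M ⟶ tob (RR M) (RR M))).symm
  mul_hom := by
    rw [tensorObj.mul_def, tensorμ_RR]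
    refine (cl_eq.2 PGAeq.B18).trans ?_
    rw [cl_comp, cl_comp]
    exact Category.assoc _ _ _

/-- The monoid structure on `▶^k`. -/
instance monWW (M : ℕ) : (k : ℕ) → MonObj (WW M k)
  | 0 => inferInstanceAs (MonObj (𝟙_ (Wd M)))
  | k + 1 => letI := monWW M k; inferInstanceAs (MonObj (RR M ⊗ WW M k))

theorem comp_isMon {M : ℕ} {X Y Z : Wd M} [MonObj X] [MonObj Y] [MonObj Z] {f : X ⟶ Y}
    {g : Y ⟶ Z} (hf : IsMonHom f) (hg : IsMonHom g) : IsMonHom (f ≫ g) := inferInstance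

theorem tens_isMon {M : ℕ} {X Y Z W : Wd M} [MonObj X] [MonObj Y] [MonObj Z] [MonObj W]
    {f : X ⟶ Y} {g : Z ⟶ W} (hf : IsMonHom f) (hg : IsMonHom g) : IsMonHom (f ⊗ₘ g) :=
  inferInstance

theorem WW_tensor (M a b : ℕ) : WW M a ⊗ WW M b = WW M (a + b) := Wd.eq (rword_append a b)

theorem WW_tensor_hom (M a b : ℕ) : IsMonHom (eqToHom (WW_tensor M a b)) := by
  induction a with
  | zero =>
    have e : 0 + b = b := Nat.zero_add b
    have h : IsMonHom (λ_ (WW M b)).hom := inferInstance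
    have h2 : ∀ c (h : b = c), IsMonHom (eqToHom (congrArg (WW M) h)) := by
      rintro c rfl
      exact (inferInstance : IsMonHom (𝟙 (WW M b)))
    have h3 := comp_isMon h (h2 _ e.symm)
    have h4 : (λ_ (WW M b)).hom ≫ eqToHom (congrArg (WW M) e.symm) =
        eqToHom (WW_tensor M 0 b) :=
      eqToHom_trans (un_tob (WW M b)) (congrArg (WW M) e.symm)
    rw [← h4]
    exact h3
  | succ a ih =>
    have h : IsMonHom (α_ (RR M) (WW M a) (WW M b)).hom := inferInstance
    have h1 : IsMonHom (𝟙 (RR M) ⊗ₘ eqToHom (WW_tensor M a b)) :=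
      tens_isMon inferInstance ih
    have h2 : ∀ c (h : a + b + 1 = c), IsMonHom (eqToHom (congrArg (WW M) h)) := by
      rintro c rfl
      exact (inferInstance : IsMonHom (𝟙 (WW M _)))
    have h3 := comp_isMon (comp_isMon h h1) (h2 (a + 1 + b) (by omega))
    have h4 : ((α_ (RR M) (WW M a) (WW M b)).hom ≫ (𝟙 (RR M) ⊗ₘ eqToHom (WW_tensor M a b))) ≫
        eqToHom (congrArg (WW M) (show a + b + 1 = a + 1 + b by omega)) =
        eqToHom (WW_tensor M (a + 1) b) := by
      change (eqToHom (tob_assoc (RR M) (WW M a) (WW M b)) ≫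
        tens (eqToHom (Eq.refl (RR M))) (eqToHom (WW_tensor M a b))) ≫ eqToHom _ = _
      rw [tens_eqToHom, eqToHom_trans]
      exact eqToHom_trans _ _
    rw [← h4]
    exact h3


theorem mergeN_aux (M k : ℕ) :
    tob (RR M) (tob (tob (WW M k) (RR M)) (WW M k)) = WW M (k + 1 + (k + 1)) :=
  Wd.eq (mergeN_dom k)

theorem mergeN_aux2 (M k : ℕ) :
    tob (RR M) (tob (tob (RR M) (WW M k)) (WW M k)) = tob (tob (RR M) (RR M)) (WW M (k + k)) :=
  Wd.eq (mergeN_mid k).symm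

/-- The class of a diagram between words of `▶`. -/
def clW {M m n : ℕ} (d : Syn M (rword m) (rword n)) : WW M m ⟶ WW M n := cl d

theorem cl_mergeN (M k : ℕ) :
    clW (mergeN M (k + 1)) =
      eqToHom (mergeN_aux M k).symm ≫
        tens (𝟙 (RR M)) (tens (sw (WW M k) (RR M)) (𝟙 (WW M k))) ≫
        eqToHom (mergeN_aux2 M k) ≫
        tens (μ[RR M]) (clW (mergeN M k)) := by
  have h : cl (mergeN M (k + 1)) = _ := cl_cast (mergeN_dom k) rfl
    ((Syn.id [Obj.r] ⊠ (Syn.symm (rword k) [Obj.r] ⊠ Syn.id (rword k)))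
          ⨟ Syn.castHom (mergeN_mid k) rfl (Syn.merge ⊠ mergeN M k))
  rw [cl_comp, cl_cast] at h
  simp only [eqToHom_self, Category.comp_id] at h
  exact h

theorem mul_WW (M k : ℕ) :
    μ[WW M k] = eqToHom (WW_tensor M k k) ≫ (clW (mergeN M k)) := by
  induction k with
  | zero => exact (Category.comp_id _).symm
  | succ k ih =>
    change tensorμ (RR M) (WW M k) (RR M) (WW M k) ≫ tens μ[RR M] μ[WW M k] = _
    have h1 : tens (μ[RR M])
        (eqToHom (WW_tensor M k k) ≫ (clW (mergeN M k))) =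
        eqToHom (show tob (tob (RR M) (RR M)) (tob (WW M k) (WW M k)) =
          tob (tob (RR M) (RR M)) (WW M (k + k)) from congrArg _ (WW_tensor M k k)) ≫
        tens (μ[RR M]) (clW (mergeN M k)) := by
      have h2 := tens_eqToHom (Eq.refl (tob (RR M) (RR M))) (WW_tensor M k k)
      have h3 := tens_comp (eqToHom (Eq.refl (tob (RR M) (RR M)))) (eqToHom (WW_tensor M k k))
        (μ[RR M])
        (clW (mergeN M k))
      rw [h2] at h3
      refine Eq.trans ?_ h3.symm
      rw [eqToHom_self]
      exact congrArg (fun z => tens z _) (Category.id_comp _).symm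
    rw [ih, h1, cl_mergeN, tensorμ_eq]
    simp only [Category.assoc, eqToHom_trans_assoc]
    exact (eqToHom_trans_assoc _ _ _).symm

theorem one_WW (M k : ℕ) : η[WW M k] = clW (m := 0) (startN M k) := by
  induction k with
  | zero => rfl
  | succ k ih =>
    change 𝟙 _ ≫ tens (cl Syn.start) η[WW M k] = _
    rw [ih, Category.id_comp]
    rfl

/-- The class of a diagram between words equal to words of `▶`. -/
def gd {M m n : ℕ} {v w : Word} (hv : v = rword m) (hw : w = rword n) (d : Syn M v w) :
    WW M m ⟶ WW M n :=
  eqToHom (Wd.eq hv.symm) ≫ cl d ≫ eqToHom (Wd.eq hw)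

theorem gd_rfl {M m n : ℕ} (d : Syn M (rword m) (rword n)) : gd rfl rfl d = clW d :=
  (Category.id_comp _).trans (Category.comp_id _)

/-- A diagram between words of `▶` is a monoid homomorphism. -/
def Good {M : ℕ} {v w : Word} (d : Syn M v w) : Prop :=
  ∃ (m n : ℕ) (hv : v = rword m) (hw : w = rword n),
    IsMonHom (gd hv hw d)

theorem rword_inj {a b : ℕ} (h : rword a = rword b) : a = b := by
  have := congrArg List.length h
  simpa [rword] using this

theorem good_mk {M m n : ℕ} (d : Syn M (rword m) (rword n))
    (h : IsMonHom (clW d)) : Good d :=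
  ⟨m, n, rfl, rfl, by rw [gd_rfl]; exact h⟩

theorem good_elim {M m n : ℕ} {d : Syn M (rword m) (rword n)} (h : Good d) :
    IsMonHom (clW d) := by
  obtain ⟨m', n', hv, hw, h⟩ := h
  obtain rfl := rword_inj hv
  obtain rfl := rword_inj hw
  rw [gd_rfl] at h
  exact h

theorem good_comp {M : ℕ} {u v w : Word} {f : Syn M u v} {g : Syn M v w}
    (hf : Good f) (hg : Good g) : Good (f ⨟ g) := by
  obtain ⟨m, n, rfl, rfl, h⟩ := id hf
  obtain ⟨m', n', e, rfl, h'⟩ := id hg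
  exact good_mk _ (comp_isMon (good_elim hf) (good_elim hg))

theorem inv_isMon {M : ℕ} {X Y : Wd M} [MonObj X] [MonObj Y] (e : X = Y)
    (h : IsMonHom (eqToHom e)) : IsMonHom (eqToHom e.symm) := by
  have : IsMonHom (eqToIso e).hom := h
  exact (inferInstance : IsMonHom (eqToIso e).inv)

theorem good_of_tensor {M a b c d : ℕ} (f : Syn M (rword a ++ rword b) (rword c ++ rword d))
    (h : IsMonHom (show WW M a ⊗ WW M b ⟶ WW M c ⊗ WW M d from cl f)) : Good f :=
  ⟨a + b, c + d, rword_append a b, rword_append c d,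
    comp_isMon (f := eqToHom (WW_tensor M a b).symm)
      (g := (show WW M a ⊗ WW M b ⟶ WW M c ⊗ WW M d from cl f) ≫ eqToHom (WW_tensor M c d))
      (inv_isMon (WW_tensor M a b) (WW_tensor_hom M a b)) (comp_isMon h (WW_tensor_hom M c d))⟩

theorem good_tensor {M : ℕ} {u1 w1 u2 w2 : Word} {f : Syn M u1 w1} {g : Syn M u2 w2}
    (hf : Good f) (hg : Good g) : Good (f ⊠ g) := by
  obtain ⟨m, n, rfl, rfl, h⟩ := id hf
  obtain ⟨m', n', rfl, rfl, h'⟩ := id hg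
  exact good_of_tensor _ (tens_isMon (good_elim hf) (good_elim hg))

theorem RW_eq (M : ℕ) : RR M = WW M 1 := rfl
theorem RRW_eq (M : ℕ) : RR M ⊗ RR M = WW M 2 := rfl

theorem RW (M : ℕ) : IsMonHom (eqToHom (RW_eq M)) := by
  have : IsMonHom (ρ_ (RR M)).inv := inferInstance
  exact this

theorem RRW (M : ℕ) : IsMonHom (eqToHom (RRW_eq M)) := by
  have h : IsMonHom (𝟙 (RR M) ⊗ₘ (ρ_ (RR M)).inv) := inferInstance
  have e : eqToHom (RRW_eq M) = 𝟙 (RR M) ⊗ₘ (ρ_ (RR M)).inv :=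
    (tens_eqToHom (Eq.refl (RR M)) (tob_un (RR M)).symm).symm
  rw [e]
  exact h

theorem good_gen {M m n : ℕ} {X Y : Wd M} [MonObj X] [MonObj Y] (hX : X = WW M m)
    (hY : Y = WW M n) (iX : IsMonHom (eqToHom hX)) (iY : IsMonHom (eqToHom hY))
    (f : Syn M X.w Y.w) (hf : IsMonHom (show X ⟶ Y from cl f)) : Good f :=
  ⟨m, n, congrArg Wd.w hX, congrArg Wd.w hY,
    comp_isMon (inv_isMon _ iX) (comp_isMon hf iY)⟩

theorem UW (M : ℕ) : IsMonHom (eqToHom (show 𝟙_ (Wd M) = WW M 0 from rfl)) :=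
  (inferInstance : IsMonHom (𝟙 (𝟙_ (Wd M))))

theorem good_acyclic {M : ℕ} {v w : Word} {d : Syn M v w} (h : Acyclic d) : Good d := by
  induction h with
  | id k => exact good_mk _ (inferInstance : IsMonHom (𝟙 (WW M k)))
  | symm k j => exact good_of_tensor _ (inferInstance : IsMonHom (β_ (WW M k) (WW M j)).hom)
  | player0 => exact good_gen _ _ (RW M) (RRW M) _ (player0_hom M)
  | lose0 => exact good_gen _ _ (RW M) (UW M) _ (lose0_hom M)
  | player1 => exact good_gen _ _ (RW M) (RRW M) _ (player1_hom M)
  | lose1 => exact good_gen _ _ (RW M) (UW M) _ (lose1_hom M)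
  | merge => exact good_gen _ _ (RRW M) (RW M) _ (merge_hom M)
  | start => exact good_gen _ _ (UW M) (RW M) _ (start_hom M)
  | priority p => exact good_gen _ _ (RW M) (RW M) _ (priority_hom M p)
  | comp _ _ hf hg => exact good_comp hf hg
  | tensor _ _ hf hg => exact good_tensor hf hg

theorem copy_delete_aux (M m n : ℕ)
    (d : Syn M (rword m) (rword n)) (hd : Acyclic d) :
    PGAeq
      (Syn.castHom (rword_append m m) rfl (d ⊠ d)
        ⨟ Syn.castHom (rword_append n n).symm rfl (mergeN M n))
      (mergeN M m ⨟ d) ∧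
    PGAeq (startN M m ⨟ d) (startN M n) := by
  have h := good_elim (good_acyclic hd)
  constructor
  · have h1 := h.mul_hom
    rw [mul_WW, mul_WW] at h1
    rw [← cl_eq, cl_comp, cl_comp, cl_cast, cl_cast, cl_tens]
    simp only [eqToHom_self, Category.comp_id]
    have h2 := congrArg (fun z => eqToHom (WW_tensor M m m).symm ≫ z) h1
    simp only [← Category.assoc, eqToHom_trans, eqToHom_refl, Category.id_comp] at h2
    simp only [← Category.assoc]
    exact h2.symm
  · have h1 := h.one_hom
    rw [one_WW, one_WW] at h1
    exact cl_eq.1 h1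

end CategoryConstruction

/-- **Statement 6** (Copying and deleting of acyclic diagrams). For any acyclic
diagram `d : ▶^m → ▶^n`, `(d ⊗ d) ; merge_n = merge_m ; d` and
`start_m ; d = start_n` are derivable in PGA. -/
theorem copy_delete_acyclic (M : ℕ) (hM : 2 ≤ M) (m n : ℕ)
    (d : Syn M (rword m) (rword n)) (hd : Acyclic d) :
    PGAeq
      (Syn.castHom (rword_append m m) rfl (d ⊠ d)
        ⨟ Syn.castHom (rword_append n n).symm rfl (mergeN M n))
      (mergeN M m ⨟ d) ∧
    PGAeq (startN M m ⨟ d) (startN M n) := by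
  exact copy_delete_aux M m n d hd

end PaperPG
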